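/- For every s ≥ 0 and every 0 < H_0 ≤ H̄ < ∞ and T > 0, the level set Φ(s) = {φ ∈ C([0, T], [H_0, H̄]) : S_{0T}(φ) ≤ s} is compact in C([0, T], [H_0, H̄]) equipped with the uniform (sup-norm) topology. -/

import Mathlib

open MeasureTheory

/-!
Call a monotone function `A` dominating for a path `f` if
`β * (f y - f x) - ∫ u in x..y, H (f u) β ≤ A y - A x` for all `x ≤ y` and every momentum `β`.
The accumulated action of `f` is dominating; conversely, a dominating `A` with increment at most `c`
forces `f` to be absolutely continuous and, by differentiating, forces `L (f t) (f' t) ≤ A' t`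
almost everywhere, so that the action of `f` is at most `c`. Hence a level set of the action is the
projection of the set of pairs `(f, A)` defined by these inequalities. They involve no derivative,
so this set is closed, and the functions `A` range over a compact product of intervals, so the
projection is closed as well. Taking `β` large in the inequalities gives equicontinuity, and the
Arzelà–Ascoli theorem concludes.
-/

open Set Filter Topology AbsolutelyContinuousOnInterval
open scoped NNReal ENNReal

section RealFunctions

variable {a b : ℝ} {f A : ℝ → ℝ}

lemma disjoint_uIoc_of_monotone (hA : Monotone A) {x y x' y' : ℝ}
    (h : Disjoint (uIoc x y) (uIoc x' y')) :
    Disjoint (uIoc (A x) (A y)) (uIoc (A x') (A y')) := by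
  simp only [uIoc, Ioc_disjoint_Ioc, ← hA.map_max, ← hA.map_min] at h ⊢
  exact hA h

lemma sum_dist_le_of_monotone (hA : Monotone A) {p q : ℝ} (hpq : ∀ t, A t ∈ Icc p q)
    {ι : Type*} (s : Finset ι) (x y : ι → ℝ)
    (hdisj : (s : Set ι).PairwiseDisjoint fun i => uIoc (x i) (y i)) :
    ∑ i ∈ s, dist (A (x i)) (A (y i)) ≤ q - p := by
  have hpq' : p ≤ q := (hpq 0).1.trans (hpq 0).2
  have hsub : ⋃ i ∈ s, uIoc (A (x i)) (A (y i)) ⊆ Icc p q := iUnion₂_subset fun i _ =>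
    uIoc_subset_uIcc.trans (uIcc_subset_Icc (hpq _) (hpq _))
  rw [← ENNReal.ofReal_le_ofReal_iff (sub_nonneg.2 hpq'),
    ENNReal.ofReal_sum_of_nonneg fun _ _ => dist_nonneg]
  calc ∑ i ∈ s, ENNReal.ofReal (dist (A (x i)) (A (y i)))
      = ∑ i ∈ s, volume (uIoc (A (x i)) (A (y i))) := by
        simp only [Real.volume_uIoc, dist_comm (A (x _)), Real.dist_eq]
    _ = volume (⋃ i ∈ s, uIoc (A (x i)) (A (y i))) :=
        (measure_biUnion_finset
          (fun i hi j hj hij => disjoint_uIoc_of_monotone hA (hdisj hi hj hij))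
          fun _ _ => measurableSet_uIoc).symm
    _ ≤ volume (Icc p q) := measure_mono hsub
    _ = ENNReal.ofReal (q - p) := Real.volume_Icc

lemma lintegral_deriv_le_of_monotone (hA : Monotone A) (hab : a ≤ b) :
    ∫⁻ t in Icc a b, ENNReal.ofReal (deriv A t) ≤ ENNReal.ofReal (A b - A a) := by
  have hint : Integrable (deriv A) (volume.restrict (Icc a b)) :=
    (intervalIntegrable_iff_integrableOn_Icc_of_le hab).1 (hA.monotoneOn _).intervalIntegrable_deriv
  have hle := (hA.monotoneOn (uIcc a b)).intervalIntegral_deriv_mem_uIcc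
  rw [uIcc_of_le (sub_nonneg.2 (hA hab)), intervalIntegral.integral_of_le hab,
    ← integral_Icc_eq_integral_Ioc] at hle
  rw [← ofReal_integral_eq_lintegral_ofReal hint (Eventually.of_forall fun _ => hA.deriv_nonneg)]
  exact ENNReal.ofReal_le_ofReal hle.2

lemma exists_eq_add_integral_iff_absolutelyContinuousOnInterval (hab : a ≤ b) :
    (∃ g : ℝ → ℝ, IntervalIntegrable g volume a b ∧
      ∀ t ∈ Icc a b, f t = f a + ∫ s in a..t, g s) ↔ AbsolutelyContinuousOnInterval f a b := by
  constructor
  · rintro ⟨g, hg, hfg⟩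
    have hprim := hg.absolutelyContinuousOnInterval_intervalIntegral left_mem_uIcc
    rw [absolutelyContinuousOnInterval_iff] at hprim ⊢
    refine fun ε hε => (hprim ε hε).imp fun δ ⟨hδ, hsum⟩ =>
      ⟨hδ, fun E hE hlen => (hsum E hE hlen).trans_eq' (Finset.sum_congr rfl fun i hi => ?_)⟩
    have hmem := hE.1 i hi
    rw [uIcc_of_le hab] at hmem
    rw [hfg _ hmem.1, hfg _ hmem.2, dist_add_left]
  · refine fun hf => ⟨deriv f, hf.intervalIntegrable_deriv, fun t ht => ?_⟩
    have hft := hf.mono (uIcc_subset_uIcc_left (Icc_subset_uIcc ht))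
    rw [hft.integral_deriv_eq_sub, add_sub_cancel]

end RealFunctions

lemma isCompact_of_isClosed_of_equicontinuous {X Y : Type*} [TopologicalSpace X]
    [CompactSpace X] [MetricSpace Y] {K : Set Y} (hK : IsCompact K) {F : Set C(X, Y)}
    (hF : IsClosed F) (hFK : ∀ φ ∈ F, ∀ x, φ x ∈ K)
    (hequi : Equicontinuous ((↑) : F → X → Y)) : IsCompact F := by
  let e := (ContinuousMap.isometryEquivBoundedOfCompact X Y).toHomeomorph
  rw [← e.isCompact_image]
  refine BoundedContinuousFunction.arzela_ascoli₂ K hK _ (e.isClosed_image.2 hF) ?_ ?_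
  · rintro _ x ⟨φ, hφ, rfl⟩
    exact hFK φ hφ x
  · exact hequi.comp fun ψ : e '' F =>
      (⟨e.symm ψ, by obtain ⟨_, φ, hφ, rfl⟩ := ψ; simpa using hφ⟩ : F)

section Action

/-- The Lagrangian of the Hamiltonian `H`: the positive part of the Legendre transform of `H h` at
the velocity `v`. The truncation at zero only matters when `H h 0` is positive. -/
noncomputable def lagrangian (H : ℝ → ℝ → ℝ) (h v : ℝ) : ℝ≥0∞ :=
  ⨆ β : ℝ, ENNReal.ofReal (v * β - H h β)

open Classical in
/-- The action functional of the Hamiltonian `H` on paths over `[a, b]`, infinite on paths that are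
not absolutely continuous. -/
noncomputable def action (H : ℝ → ℝ → ℝ) (a b : ℝ) (f : ℝ → ℝ) : ℝ≥0∞ :=
  if AbsolutelyContinuousOnInterval f a b then ∫⁻ t in Icc a b, lagrangian H (f t) (deriv f t)
  else ⊤

/-- A function `A` dominates the action of the path `f` if its increments bound from above zero and,
for every momentum `β`, the increments of `t ↦ β * f t - ∫ u in a..t, H (f u) β`. The accumulated
action of `f` is such a function, and no derivative of `f` enters the definition. -/
structure DominatesAction (H : ℝ → ℝ → ℝ) (a b : ℝ) (f A : ℝ → ℝ) : Prop where
  monotone : Monotone A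
  monotoneOn_sub : ∀ β, MonotoneOn (fun t => A t - (β * f t - ∫ u in a..t, H (f u) β)) (Icc a b)

variable {H : ℝ → ℝ → ℝ} {K : Set ℝ} {a b : ℝ} {f A : ℝ → ℝ} {c : ℝ≥0}

lemma action_eq_of_eq_lintegral_of_eq_top {L : ℝ → ℝ → ℝ≥0∞}
    (hL : ∀ h v, L h v = ⨆ β : ℝ, ENNReal.ofReal (v * β - H h β)) (hab : a ≤ b)
    {S : (ℝ → ℝ) → ℝ≥0∞}
    (hSac : ∀ φ : ℝ → ℝ,
      (∃ g : ℝ → ℝ, IntervalIntegrable g volume a b ∧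
        ∀ t ∈ Icc a b, φ t = φ a + ∫ s in a..t, g s) →
      S φ = ∫⁻ t in Icc a b, L (φ t) (deriv φ t))
    (hSnac : ∀ φ : ℝ → ℝ,
      (¬ ∃ g : ℝ → ℝ, IntervalIntegrable g volume a b ∧
        ∀ t ∈ Icc a b, φ t = φ a + ∫ s in a..t, g s) →
      S φ = ⊤) :
    action H a b = S := by
  ext φ
  have hL' : L = lagrangian H := funext₂ hL
  have hac := exists_eq_add_integral_iff_absolutelyContinuousOnInterval (f := φ) hab
  by_cases hφ : AbsolutelyContinuousOnInterval φ a b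
  · rw [action, if_pos hφ, hSac φ (hac.2 hφ), hL']
  · rw [action, if_neg hφ, hSnac φ (mt hac.1 hφ)]

-- Fenchel–Young: `β * v - H h β ≤ L h v`, integrated along the path.
lemma mul_sub_sub_integral_le_toReal_lintegral_lagrangian (hab : a ≤ b)
    (hf : AbsolutelyContinuousOnInterval f a b) {β : ℝ} (hHf : Continuous fun t => H (f t) β)
    (hfin : ∫⁻ t in Ioc a b, lagrangian H (f t) (deriv f t) ≠ ∞) :
    β * (f b - f a) - ∫ u in a..b, H (f u) β
      ≤ (∫⁻ t in Ioc a b, lagrangian H (f t) (deriv f t)).toReal := by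
  have hderiv := hf.intervalIntegrable_deriv.mul_const β
  have hH : IntervalIntegrable (fun t => H (f t) β) volume a b := hHf.intervalIntegrable a b
  have hint := (intervalIntegrable_iff_integrableOn_Ioc_of_le hab).1 (hderiv.sub hH)
  calc β * (f b - f a) - ∫ u in a..b, H (f u) β
      = ∫ t in Ioc a b, (deriv f t * β - H (f t) β) := by
        rw [← intervalIntegral.integral_of_le hab, intervalIntegral.integral_sub hderiv hH,
          intervalIntegral.integral_mul_const, hf.integral_deriv_eq_sub, mul_comm]
    _ ≤ (∫⁻ t in Ioc a b, ENNReal.ofReal (deriv f t * β - H (f t) β)).toReal := by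
        rw [integral_eq_lintegral_pos_part_sub_lintegral_neg_part hint]
        exact sub_le_self _ ENNReal.toReal_nonneg
    _ ≤ (∫⁻ t in Ioc a b, lagrangian H (f t) (deriv f t)).toReal :=
        ENNReal.toReal_mono hfin <| lintegral_mono fun t =>
          le_iSup (fun β => ENNReal.ofReal (deriv f t * β - H (f t) β)) β

lemma exists_dominatesAction_of_action_le (hHf : ∀ β, Continuous fun t => H (f t) β)
    (hfc : action H a b f ≤ c) :
    ∃ A : ℝ → Icc (0 : ℝ) c, DominatesAction H a b f (fun t => A t) := by
  have hf : AbsolutelyContinuousOnInterval f a b := by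
    by_contra hf
    simp [action, hf] at hfc
  rw [action, if_pos hf] at hfc
  let ν := (volume.restrict (Icc a b)).withDensity fun t => lagrangian H (f t) (deriv f t)
  have hνc : ν univ ≤ c := by rwa [withDensity_apply _ .univ, Measure.restrict_univ]
  have : IsFiniteMeasure ν := ⟨hνc.trans_lt ENNReal.coe_lt_top⟩
  refine ⟨fun t => ⟨ν.real (Iic t), measureReal_nonneg, ?_⟩,
    fun x y hxy => measureReal_mono (Iic_subset_Iic.2 hxy), fun β x hx y hy hxy => ?_⟩
  · exact ENNReal.toReal_le_coe_of_le_coe ((measure_mono (subset_univ _)).trans hνc)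
  have hνIoc : ν (Ioc x y) = ∫⁻ t in Ioc x y, lagrangian H (f t) (deriv f t) := by
    rw [withDensity_apply _ measurableSet_Ioc, Measure.restrict_restrict measurableSet_Ioc,
      inter_eq_left.2 (Ioc_subset_Icc_self.trans (Icc_subset_Icc hx.1 hy.2))]
  have hνsub : ν.real (Iic y) - ν.real (Iic x) = ν.real (Ioc x y) := by
    rw [← Iic_sdiff_Iic, measureReal_sdiff (Iic_subset_Iic.2 hxy) measurableSet_Iic]
  have hincr := mul_sub_sub_integral_le_toReal_lintegral_lagrangian hxy
    (hf.mono (uIcc_subset_uIcc (Icc_subset_uIcc hx) (Icc_subset_uIcc hy))) (hHf β)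
    (hνIoc ▸ measure_ne_top ν _)
  rw [← hνIoc, ← measureReal_def, ← hνsub,
    ← intervalIntegral.integral_interval_sub_left (a := a)
      ((hHf β).intervalIntegrable _ _) ((hHf β).intervalIntegrable _ _)] at hincr
  dsimp only
  linarith

namespace DominatesAction

lemma lagrangian_le_ofReal_deriv (hA : DominatesAction H a b f A)
    (hHf : ∀ β, Continuous fun t => H (f t) β) {t : ℝ} (ht : t ∈ Ioo a b)
    (hft : DifferentiableAt ℝ f t) (hAt : DifferentiableAt ℝ A t) :
    lagrangian H (f t) (deriv f t) ≤ ENNReal.ofReal (deriv A t) := by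
  refine iSup_le fun β => ENNReal.ofReal_le_ofReal ?_
  have hderiv := hAt.hasDerivAt.fun_sub <|
    (hft.hasDerivAt.const_mul β).fun_sub ((hHf β).integral_hasStrictDerivAt a t).hasDerivAt
  have hnonneg := (hA.monotoneOn_sub β).derivWithin_nonneg (x := t)
  rw [hderiv.hasDerivWithinAt.derivWithin
    (uniqueDiffWithinAt_of_mem_nhds (Icc_mem_nhds ht.1 ht.2))] at hnonneg
  linarith

lemma action_le (hA : DominatesAction H a b f A) (hab : a ≤ b)
    (hHf : ∀ β, Continuous fun t => H (f t) β) (hf : AbsolutelyContinuousOnInterval f a b) :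
    action H a b f ≤ ENNReal.ofReal (A b - A a) := by
  rw [action, if_pos hf]
  refine (lintegral_mono_ae ?_).trans (lintegral_deriv_le_of_monotone hA.monotone hab)
  rw [← restrict_Ioo_eq_restrict_Icc, ae_restrict_iff' measurableSet_Ioo]
  filter_upwards [hf.ae_differentiableAt, hA.monotone.ae_differentiableAt] with t hft hAt ht
  exact hA.lagrangian_le_ofReal_deriv hHf ht (hft (Icc_subset_uIcc (Ioo_subset_Icc_self ht))) hAt

lemma mul_dist_le (hA : DominatesAction H a b f A) (hHf : ∀ β, Continuous fun t => H (f t) β)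
    {r B : ℝ} (hB : ∀ t, |H (f t) r| ≤ B) (hB' : ∀ t, |H (f t) (-r)| ≤ B)
    {x y : ℝ} (hx : x ∈ Icc a b) (hy : y ∈ Icc a b) :
    r * dist (f x) (f y) ≤ dist (A x) (A y) + B * dist x y := by
  wlog hxy : x ≤ y generalizing x y
  · simpa only [dist_comm] using this hy hx (le_of_not_ge hxy)
  have hincr {β : ℝ} (hβ : ∀ t, |H (f t) β| ≤ B) :
      β * (f y - f x) ≤ dist (A x) (A y) + B * dist x y := by
    have hmono := hA.monotoneOn_sub β hx hy hxy
    have hsub := intervalIntegral.integral_interval_sub_left (a := a)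
      ((hHf β).intervalIntegrable a y) ((hHf β).intervalIntegrable (μ := volume) a x)
    have hHle := (Real.le_norm_self _).trans <|
      intervalIntegral.norm_integral_le_of_norm_le_const (a := x) (b := y) fun t _ => hβ t
    dsimp only at hmono
    rw [dist_comm (A x), dist_comm x, Real.dist_eq, Real.dist_eq]
    linarith [le_abs_self (A y - A x)]
  rw [dist_comm (f x), Real.dist_eq]
  rcases abs_cases (f y - f x) with ⟨h, -⟩ | ⟨h, -⟩ <;> rw [h]
  · exact hincr hB
  · simpa only [mul_neg, neg_mul] using hincr hB'

lemma mul_sum_dist_le (hA : DominatesAction H a b f A) (hab : a ≤ b)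
    (hHf : ∀ β, Continuous fun t => H (f t) β) {p q : ℝ} (hpq : ∀ t, A t ∈ Icc p q)
    {r B : ℝ} (hB : ∀ t, |H (f t) r| ≤ B) (hB' : ∀ t, |H (f t) (-r)| ≤ B)
    {E : ℕ × (ℕ → ℝ × ℝ)} (hE : E ∈ disjWithin a b) :
    r * ∑ i ∈ Finset.range E.1, dist (f (E.2 i).1) (f (E.2 i).2)
      ≤ q - p + B * ∑ i ∈ Finset.range E.1, dist (E.2 i).1 (E.2 i).2 := by
  have hmem := hE.1
  rw [uIcc_of_le hab] at hmem
  calc r * ∑ i ∈ Finset.range E.1, dist (f (E.2 i).1) (f (E.2 i).2)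
      ≤ ∑ i ∈ Finset.range E.1, (dist (A (E.2 i).1) (A (E.2 i).2)
          + B * dist (E.2 i).1 (E.2 i).2) := by
        rw [Finset.mul_sum]
        exact Finset.sum_le_sum fun i hi =>
          hA.mul_dist_le hHf hB hB' (hmem i hi).1 (hmem i hi).2
    _ = ∑ i ∈ Finset.range E.1, dist (A (E.2 i).1) (A (E.2 i).2)
          + B * ∑ i ∈ Finset.range E.1, dist (E.2 i).1 (E.2 i).2 := by
        rw [Finset.sum_add_distrib, Finset.mul_sum]
    _ ≤ q - p + B * ∑ i ∈ Finset.range E.1, dist (E.2 i).1 (E.2 i).2 := by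
        gcongr
        exact sum_dist_le_of_monotone hA.monotone hpq _ _ _ hE.2

end DominatesAction

lemma exists_pos_forall_sum_dist_lt_of_dominatesAction (hab : a ≤ b) (hK : IsCompact K)
    (hH : ∀ β, ContinuousOn (fun h => H h β) K) (c : ℝ≥0) {ε : ℝ} (hε : 0 < ε) :
    ∃ δ > 0, ∀ (f : ℝ → ℝ) (A : ℝ → Icc (0 : ℝ) c), Continuous f → (∀ t, f t ∈ K) →
      DominatesAction H a b f (fun t => A t) → ∀ E ∈ disjWithin a b,
        ∑ i ∈ Finset.range E.1, dist (E.2 i).1 (E.2 i).2 < δ →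
          ∑ i ∈ Finset.range E.1, dist (f (E.2 i).1) (f (E.2 i).2) < ε := by
  -- The increments of `A` sum to at most `c`, so they contribute at most `c / r < ε`.
  let r : ℝ := (c + 1) / ε
  have hr : 0 < r := by positivity
  obtain ⟨B₁, hB₁⟩ := hK.exists_bound_of_continuousOn (hH r)
  obtain ⟨B₂, hB₂⟩ := hK.exists_bound_of_continuousOn (hH (-r))
  let B : ℝ := max 1 (max B₁ B₂)
  have hB : 0 < B := zero_lt_one.trans_le (le_max_left _ _)
  refine ⟨1 / B, by positivity, fun f A hf hfK hA E hE hlen => ?_⟩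
  have hHf β : Continuous fun t => H (f t) β := (hH β).comp_continuous hf hfK
  have hsum := hA.mul_sum_dist_le hab hHf (fun t => (A t).2) (r := r) (B := B)
    (fun t => (hB₁ _ (hfK t)).trans ((le_max_left _ _).trans (le_max_right _ _)))
    (fun t => (hB₂ _ (hfK t)).trans ((le_max_right _ _).trans (le_max_right _ _))) hE
  rw [lt_div_iff₀' hB] at hlen
  rw [← mul_lt_mul_iff_right₀ hr, div_mul_cancel₀ _ hε.ne']
  linarith

theorem action_le_iff_exists_dominatesAction (hab : a ≤ b) (hK : IsCompact K)
    (hH : ∀ β, ContinuousOn (fun h => H h β) K) (hf : Continuous f) (hfK : ∀ t, f t ∈ K) :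
    action H a b f ≤ c ↔ ∃ A : ℝ → Icc (0 : ℝ) c, DominatesAction H a b f (fun t => A t) := by
  have hHf β : Continuous fun t => H (f t) β := (hH β).comp_continuous hf hfK
  refine ⟨exists_dominatesAction_of_action_le hHf, fun ⟨A, hA⟩ => ?_⟩
  have hfac : AbsolutelyContinuousOnInterval f a b :=
    (absolutelyContinuousOnInterval_iff f a b).2 fun ε hε =>
      (exists_pos_forall_sum_dist_lt_of_dominatesAction hab hK hH c hε).imp
        fun _ ⟨hδ, hsum⟩ => ⟨hδ, hsum f A hf hfK hA⟩
  calc action H a b f ≤ ENNReal.ofReal (A b - A a) := hA.action_le hab hHf hfac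
    _ ≤ ENNReal.ofReal c := ENNReal.ofReal_le_ofReal (by linarith [(A a).2.1, (A b).2.2])
    _ = c := ENNReal.ofReal_coe_nnreal

end Action

section LevelSets

variable {H : ℝ → ℝ → ℝ} {K : Set ℝ} {a b : ℝ}

lemma continuousOn_integral_IccExtend (hab : a ≤ b) {G : ℝ → ℝ} (hG : ContinuousOn G K) (x : ℝ) :
    ContinuousOn (fun φ : C(Icc a b, ℝ) => ∫ u in a..x, G (IccExtend hab φ u))
      {φ | ∀ t, φ t ∈ K} := by
  rw [continuousOn_iff_continuous_domRestrict]
  refine intervalIntegral.continuous_parametric_intervalIntegral_of_continuous' ?_ a x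
  refine hG.comp_continuous ?_ fun p => p.1.2 _
  have hproj : Continuous fun p : {φ : C(Icc a b, ℝ) | ∀ t, φ t ∈ K} × ℝ => projIcc a b hab p.2 :=
    continuous_projIcc.comp continuous_snd
  exact (continuous_subtype_val.comp continuous_fst).eval hproj

lemma isClosed_setOf_dominatesAction (hab : a ≤ b) (hK : IsClosed K)
    (hH : ∀ β, ContinuousOn (fun h => H h β) K) (c : ℝ≥0) :
    IsClosed {p : C(Icc a b, ℝ) × (ℝ → Icc (0 : ℝ) c) |
      (∀ t, p.1 t ∈ K) ∧ DominatesAction H a b (IccExtend hab p.1) fun t => p.2 t} := by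
  let X : Set (C(Icc a b, ℝ) × (ℝ → Icc (0 : ℝ) c)) := {p | ∀ t, p.1 t ∈ K}
  have hX : IsClosed X := by
    simp only [X, ofPred_forall]
    exact isClosed_iInter fun t => hK.preimage (by fun_prop)
  let slack (β : ℝ) (p : C(Icc a b, ℝ) × (ℝ → Icc (0 : ℝ) c)) (t : ℝ) : ℝ :=
    p.2 t - (β * IccExtend hab p.1 t - ∫ u in a..t, H (IccExtend hab p.1 u) β)
  have hslack β : ContinuousOn (slack β) X := continuousOn_pi.2 fun t => by
    have hint : ContinuousOn (fun p : C(Icc a b, ℝ) × (ℝ → Icc (0 : ℝ) c) =>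
        ∫ u in a..t, H (IccExtend hab p.1 u) β) X :=
      ContinuousOn.comp' (continuousOn_integral_IccExtend hab (hH β) t) continuousOn_fst
        fun _ hp => hp
    simp only [slack, IccExtend_apply]
    fun_prop
  have hmonotone : IsClosed {p : C(Icc a b, ℝ) × (ℝ → Icc (0 : ℝ) c) |
      Monotone fun t => (p.2 t : ℝ)} := isClosed_monotone.preimage (by fun_prop)
  have hmonotoneOn β : IsClosed (X ∩ slack β ⁻¹' {g | MonotoneOn g (Icc a b)}) :=
    (hslack β).preimage_isClosed_of_isClosed hX isClosed_monotoneOn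
  convert! hmonotone.inter (isClosed_iInter hmonotoneOn) using 1
  ext p
  simp only [mem_inter_iff, mem_iInter]
  exact ⟨fun ⟨hp, hA⟩ => ⟨hA.monotone, fun β => ⟨hp, hA.monotoneOn_sub β⟩⟩,
    fun ⟨hmono, hsub⟩ => ⟨(hsub 0).1, hmono, fun β => (hsub β).2⟩⟩

lemma uniformEquicontinuous_setOf_action_le (hab : a ≤ b) (hK : IsCompact K)
    (hH : ∀ β, ContinuousOn (fun h => H h β) K) (c : ℝ≥0) :
    UniformEquicontinuous ((↑) : {φ : C(Icc a b, ℝ) | (∀ t, φ t ∈ K) ∧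
      action H a b (IccExtend hab φ) ≤ c} → Icc a b → ℝ) := by
  rw [Metric.uniformEquicontinuous_iff]
  intro ε hε
  obtain ⟨δ, hδ, hsum⟩ := exists_pos_forall_sum_dist_lt_of_dominatesAction hab hK hH c hε
  refine ⟨δ, hδ, fun x y hxy ⟨φ, hφK, hφc⟩ => ?_⟩
  have hφ := φ.continuous.Icc_extend' (h := hab)
  obtain ⟨A, hA⟩ := (action_le_iff_exists_dominatesAction hab hK hH hφ fun t => hφK _).1 hφc
  have hdist := hsum _ A hφ (fun t => hφK _) hA (1, fun _ => (x, y))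
    (by simp [disjWithin, Icc_subset_uIcc x.2, Icc_subset_uIcc y.2])
  simpa using hdist (by simpa using! hxy)

theorem stmt_15_general (hab : a ≤ b) (hK : IsCompact K)
    (hH : ∀ β, ContinuousOn (fun h => H h β) K) (c : ℝ≥0) :
    IsCompact {φ : C(Icc a b, ℝ) | (∀ t, φ t ∈ K) ∧ action H a b (IccExtend hab φ) ≤ c} := by
  refine isCompact_of_isClosed_of_equicontinuous hK ?_ (fun φ hφ => hφ.1)
    (uniformEquicontinuous_setOf_action_le hab hK hH c).equicontinuous
  convert! isClosedMap_fst_of_compactSpace _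
    (isClosed_setOf_dominatesAction hab hK.isClosed hH c) using 1
  ext φ
  simp only [mem_image, mem_ofPred_eq, Prod.exists, exists_and_left, exists_and_right,
    exists_eq_right]
  exact and_congr_right fun hφK =>
    action_le_iff_exists_dominatesAction hab hK hH φ.continuous.Icc_extend' fun t => hφK _

end LevelSets

/-- compactness of level sets of the action functional: for every
s ≥ 0, 0 < H₀ ≤ H̄ and T > 0, the set Φ(s) = {φ ∈ C([0,T],[H₀,H̄]) : S₀T(φ) ≤ s}
is compact in C([0,T],ℝ) with the uniform topology (which, on the compact interval
[0,T], is the compact-open topology of `C(Set.Icc 0 T, ℝ)`).  The action functional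
S₀T is ∫₀ᵀ L(φ_t, φ̇_t) dt for absolutely continuous φ and +∞ otherwise; a continuous
map on [0,T] is identified with its extension `Set.IccExtend` to ℝ. -/
theorem stmt_15
    {Ω : Type*} [MeasurableSpace Ω] (P : Measure Ω) [IsProbabilityMeasure P]
    (ξ η : Ω → ℝ) (hξmeas : Measurable ξ) (hηmeas : Measurable η)
    (hξdens : ∃ f : ℝ → ℝ, Continuous f ∧
      Measure.map ξ P = volume.withDensity (fun x => ENNReal.ofReal (f x)))
    (hηdens : ∃ f : ℝ → ℝ, Continuous f ∧
      Measure.map η P = volume.withDensity (fun x => ENNReal.ofReal (f x)))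
    (M : ℝ) (hM : 0 < M)
    (hξbdd : P {ω | |ξ ω| ≤ M} = 1) (hηbdd : P {ω | |η ω| ≤ M} = 1)
    (hmean : 0 < ∫ ω, (ξ ω + η ω) ∂P)
    (ζ : Ω → ℝ) (hζ : ∀ ω, ζ ω = -(ξ ω + η ω))
    (D : ℝ) (hD : 0 < D)
    (H : ℝ → ℝ → ℝ)
    (hH : ∀ h β, H h β =
      Real.sqrt (2 * h) / (2 * D) * Real.log (∫ ω, Real.exp (β * ζ ω) ∂P))
    (L : ℝ → ℝ → ENNReal)
    (hL : ∀ h a, L h a = ⨆ β : ℝ, ENNReal.ofReal (a * β - H h β))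
    (T H₀ Hbar : ℝ) (hT : 0 < T) (hH₀ : 0 < H₀) (hHle : H₀ ≤ Hbar)
    (S : (ℝ → ℝ) → ENNReal)
    (hSac : ∀ φ : ℝ → ℝ,
      (∃ g : ℝ → ℝ, IntervalIntegrable g volume 0 T ∧
          ∀ t ∈ Set.Icc (0 : ℝ) T, φ t = φ 0 + ∫ s in (0 : ℝ)..t, g s) →
        S φ = ∫⁻ t in Set.Icc (0 : ℝ) T, L (φ t) (deriv φ t))
    (hSnac : ∀ φ : ℝ → ℝ,
      (¬ ∃ g : ℝ → ℝ, IntervalIntegrable g volume 0 T ∧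
          ∀ t ∈ Set.Icc (0 : ℝ) T, φ t = φ 0 + ∫ s in (0 : ℝ)..t, g s) →
        S φ = ⊤)
    (s : ℝ) (hs : 0 ≤ s) :
    IsCompact {φ : C(Set.Icc (0 : ℝ) T, ℝ) |
      (∀ t, φ t ∈ Set.Icc H₀ Hbar) ∧
      S (Set.IccExtend hT.le ⇑φ) ≤ ENNReal.ofReal s} := by
  have hHcont β : ContinuousOn (fun h => H h β) (Icc H₀ Hbar) := by simp only [hH]; fun_prop
  rw [← action_eq_of_eq_lintegral_of_eq_top hL hT.le hSac hSnac]
  exact stmt_15_general hT.le isCompact_Icc hHcont s.toNNReal
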